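/- Let x be a nonzero element of H and let y be a nonzero element of Ĥ(x). If R_A(y) > r_{S_u}(x^{(0)}), then σ_{S_u}(y) = {λ ∈ ℂ : |λ| ≤ r_{S_u}(x^{(0)})}. -/

import Mathlib

open Filter Topology ENNReal

noncomputable section

/-- The local resolvent set of `T` at `x`. -/
def localResolventSet {E : Type*} [NormedAddCommGroup E] [NormedSpace ℂ E]
    (T : E →L[ℂ] E) (x : E) : Set ℂ :=
  {l : ℂ | ∃ U : Set ℂ, IsOpen U ∧ l ∈ U ∧ ∃ f : ℂ → E, AnalyticOnNhd ℂ f U ∧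
    ∀ m ∈ U, T (f m) - m • f m = x}

/-- The local spectrum of `T` at `x`. -/
def localSpectrum {E : Type*} [NormedAddCommGroup E] [NormedSpace ℂ E]
    (T : E →L[ℂ] E) (x : E) : Set ℂ :=
  (localResolventSet T x)ᶜ

/-- The local spectral radius of `T` at `x`: `limsup ‖Tⁿx‖^{1/n}`. -/
def localSpecRad {E : Type*} [NormedAddCommGroup E] [NormedSpace ℂ E]
    (T : E →L[ℂ] E) (x : E) : ℝ≥0∞ :=
  limsup (fun n : ℕ => (‖(T ^ n) x‖₊ : ℝ≥0∞) ^ (1 / n : ℝ)) atTop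

/-- The lower bound `m(T) = inf {‖Tx‖ : ‖x‖ = 1}` of an operator. -/
def lowerBound {E : Type*} [NormedAddCommGroup E] [NormedSpace ℂ E]
    (T : E →L[ℂ] E) : ℝ :=
  sInf ((fun x => ‖T x‖) '' {x : E | ‖x‖ = 1})

/-- `r₁(T) = lim m(Tⁿ)^{1/n} = sup_{n ≥ 1} m(Tⁿ)^{1/n}`. -/
def r1 {E : Type*} [NormedAddCommGroup E] [NormedSpace ℂ E]
    (T : E →L[ℂ] E) : ℝ≥0∞ :=
  ⨆ n : ℕ, ENNReal.ofReal (lowerBound (T ^ (n + 1))) ^ (1 / (n + 1) : ℝ)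

/-- The point spectrum: the set of eigenvalues. -/
def pointSpectrum {E : Type*} [NormedAddCommGroup E] [NormedSpace ℂ E]
    (T : E →L[ℂ] E) : Set ℂ :=
  {l : ℂ | ∃ x : E, x ≠ 0 ∧ T x = l • x}

/-- The set of points where `T` fails the single-valued extension property. -/
def svepFails {E : Type*} [NormedAddCommGroup E] [NormedSpace ℂ E]
    (T : E →L[ℂ] E) : Set ℂ :=
  {l₀ : ℂ | ¬ ∀ r : ℝ, 0 < r → ∀ f : ℂ → E, AnalyticOnNhd ℂ f (Metric.ball l₀ r) →
      (∀ m ∈ Metric.ball l₀ r, T (f m) - m • f m = 0) →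
      ∀ m ∈ Metric.ball l₀ r, f m = 0}

/-- Dunford's condition (C). -/
def DunfordC {E : Type*} [NormedAddCommGroup E] [NormedSpace ℂ E]
    (T : E →L[ℂ] E) : Prop :=
  ∀ F : Set ℂ, IsClosed F → IsClosed {y : E | localSpectrum T y ⊆ F}

/-- Bishop's property (β). -/
def BishopBeta {E : Type*} [NormedAddCommGroup E] [NormedSpace ℂ E]
    (T : E →L[ℂ] E) : Prop :=
  ∀ U : Set ℂ, IsOpen U → ∀ f : ℕ → ℂ → E,
    (∀ m, AnalyticOnNhd ℂ (f m) U) →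
    TendstoLocallyUniformlyOn (fun m z => T (f m z) - z • f m z) 0 atTop U →
    TendstoLocallyUniformlyOn f 0 atTop U

section Shift

variable {H : Type*} [NormedAddCommGroup H] [InnerProductSpace ℂ H] [CompleteSpace H]

/-- `wB A n = B_n = A_{n-1} ⋯ A_1 A_0`, with `B_0 = 1`. -/
def wB (A : ℕ → (H →L[ℂ] H)ˣ) : ℕ → (H →L[ℂ] H)ˣ
  | 0 => 1
  | n + 1 => A n * wB A n

/-- `wBi A n = B_n⁻¹` as an operator. -/
def wBi (A : ℕ → (H →L[ℂ] H)ˣ) (n : ℕ) : H →L[ℂ] H :=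
  (((wB A n)⁻¹ : (H →L[ℂ] H)ˣ) : H →L[ℂ] H)

/-- `R₂⁺(S_u) = sup_{x ≠ 0} 1 / limsup ‖(B_n*)⁻¹ x‖^{1/n}` (with `1/0 = ∞`). -/
def R2plus (A : ℕ → (H →L[ℂ] H)ˣ) : ℝ≥0∞ :=
  ⨆ (x : H) (_ : x ≠ 0),
    (limsup (fun n : ℕ =>
      (‖ContinuousLinearMap.adjoint (wBi A n) x‖₊ : ℝ≥0∞) ^ (1 / n : ℝ)) atTop)⁻¹

/-- `R₂⁻(S_u) = inf_{x ≠ 0} 1 / limsup ‖(B_n*)⁻¹ x‖^{1/n}` (with `1/0 = ∞`). -/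
def R2minus (A : ℕ → (H →L[ℂ] H)ˣ) : ℝ≥0∞ :=
  ⨅ (x : H) (_ : x ≠ 0),
    (limsup (fun n : ℕ =>
      (‖ContinuousLinearMap.adjoint (wBi A n) x‖₊ : ℝ≥0∞) ^ (1 / n : ℝ)) atTop)⁻¹

/-- `R₃⁺(S_u) = sup_{x ≠ 0} limsup ‖B_n x‖^{1/n}`. -/
def R3plus (A : ℕ → (H →L[ℂ] H)ˣ) : ℝ≥0∞ :=
  ⨆ (x : H) (_ : x ≠ 0),
    limsup (fun n : ℕ => (‖(wB A n : H →L[ℂ] H) x‖₊ : ℝ≥0∞) ^ (1 / n : ℝ)) atTop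

/-- `R₃⁻(S_u) = inf_{x ≠ 0} limsup ‖B_n x‖^{1/n}`. -/
def R3minus (A : ℕ → (H →L[ℂ] H)ˣ) : ℝ≥0∞ :=
  ⨅ (x : H) (_ : x ≠ 0),
    limsup (fun n : ℕ => (‖(wB A n : H →L[ℂ] H) x‖₊ : ℝ≥0∞) ^ (1 / n : ℝ)) atTop

/-- `r₂(S_u) = 1 / limsup ‖B_n⁻¹‖^{1/n}` (with `1/0 = ∞`). -/
def r2 (A : ℕ → (H →L[ℂ] H)ˣ) : ℝ≥0∞ :=
  (limsup (fun n : ℕ => (‖wBi A n‖₊ : ℝ≥0∞) ^ (1 / n : ℝ)) atTop)⁻¹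

/-- `r₃(S_u) = 1 / liminf ‖B_n⁻¹‖^{1/n}` (with `1/0 = ∞`). -/
def r3 (A : ℕ → (H →L[ℂ] H)ˣ) : ℝ≥0∞ :=
  (liminf (fun n : ℕ => (‖wBi A n‖₊ : ℝ≥0∞) ^ (1 / n : ℝ)) atTop)⁻¹

/-- `R_𝒜(x) = 1 / limsup ‖B_n⁻¹ x_n‖^{1/n}` (with `1/0 = ∞`). -/
def RA (A : ℕ → (H →L[ℂ] H)ˣ) (x : lp (fun _ : ℕ => H) 2) : ℝ≥0∞ :=
  (limsup (fun n : ℕ => (‖wBi A n (x n)‖₊ : ℝ≥0∞) ^ (1 / n : ℝ)) atTop)⁻¹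

end Shift

theorem aux_bound {E : Type*} [NormedAddCommGroup E] (u : ℕ → E) (s : NNReal) (hs : 0 < s)
    (h : limsup (fun n : ℕ => (‖u n‖₊ : ℝ≥0∞) ^ (1 / n : ℝ)) atTop < (s : ℝ≥0∞)) :
    ∃ C : ℝ, 0 ≤ C ∧ ∀ n, ‖u n‖ ≤ C * (s : ℝ) ^ n := by
  have h1 := eventually_lt_of_limsup_lt h
  obtain ⟨N, hN⟩ := eventually_atTop.1 h1
  have key : ∀ n, N + 1 ≤ n → ‖u n‖ ≤ (s : ℝ) ^ n := by
    intro n hn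
    have hn0 : n ≠ 0 := by omega
    have h2 := (hN n (by omega)).le
    have h3 : (‖u n‖₊ : ℝ≥0∞) ≤ (s : ℝ≥0∞) ^ n := by
      have h4 := pow_le_pow_left' h2 n
      rwa [← ENNReal.rpow_natCast, ← ENNReal.rpow_mul, one_div,
        inv_mul_cancel₀ (by exact_mod_cast hn0), ENNReal.rpow_one] at h4
    have h5 : ‖u n‖₊ ≤ s ^ n := by exact_mod_cast h3
    exact_mod_cast h5
  have hs' : (0 : ℝ) < s := by exact_mod_cast hs
  refine ⟨1 + ∑ k ∈ Finset.range (N + 1), ‖u k‖ / (s : ℝ) ^ k, by positivity, fun n => ?_⟩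
  by_cases hn : N + 1 ≤ n
  · refine (key n hn).trans ?_
    have : (0 : ℝ) ≤ ∑ k ∈ Finset.range (N + 1), ‖u k‖ / (s : ℝ) ^ k := by positivity
    have h6 : (0 : ℝ) < (s : ℝ) ^ n := by positivity
    nlinarith
  · have h6 : (0 : ℝ) < (s : ℝ) ^ n := by positivity
    have h7 : ‖u n‖ / (s : ℝ) ^ n ≤ ∑ k ∈ Finset.range (N + 1), ‖u k‖ / (s : ℝ) ^ k :=
      Finset.single_le_sum (f := fun k => ‖u k‖ / (s : ℝ) ^ k) (fun _ _ => by positivity)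
        (Finset.mem_range.2 (by omega))
    rw [← div_le_iff₀ h6]
    linarith

theorem aux_limsup {E : Type*} [NormedAddCommGroup E] (u : ℕ → E) (s : NNReal) (C : ℝ)
    (h : ∀ᶠ n in atTop, ‖u n‖ ≤ C * (s : ℝ) ^ n) :
    limsup (fun n : ℕ => (‖u n‖₊ : ℝ≥0∞) ^ (1 / n : ℝ)) atTop ≤ (s : ℝ≥0∞) := by
  refine le_of_forall_gt fun t ht => ?_
  obtain ⟨q, hq1, hq2⟩ := ENNReal.lt_iff_exists_nnreal_btwn.1 ht
  refine lt_of_le_of_lt ?_ hq2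
  have hsq : (s : ℝ) < q := by exact_mod_cast hq1
  have hs0 : (0 : ℝ) ≤ s := s.2
  have hq0 : (0 : ℝ) < q := hs0.trans_lt hsq
  have hlim : Tendsto (fun n : ℕ => C * ((s : ℝ) / q) ^ n) atTop (𝓝 (C * 0)) :=
    (tendsto_pow_atTop_nhds_zero_of_lt_one (by positivity) ((div_lt_one hq0).2 hsq)).const_mul C
  rw [mul_zero] at hlim
  have hev := hlim.eventually (gt_mem_nhds one_pos)
  refine limsup_le_of_le (by isBoundedDefault) ?_
  filter_upwards [h, hev, eventually_gt_atTop 0] with n h1 h2 h3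
  have h4 : ‖u n‖ ≤ (q : ℝ) ^ n := by
    rw [div_pow, ← mul_div_assoc, div_lt_one (by positivity)] at h2
    linarith
  have h5 : (‖u n‖₊ : ℝ≥0∞) ≤ (q : ℝ≥0∞) ^ n := by
    have : ‖u n‖₊ ≤ q ^ n := by exact_mod_cast h4
    exact_mod_cast this
  calc (‖u n‖₊ : ℝ≥0∞) ^ (1 / n : ℝ) ≤ ((q : ℝ≥0∞) ^ n) ^ (1 / n : ℝ) :=
        ENNReal.rpow_le_rpow h5 (by positivity)
    _ = q := by
        rw [← ENNReal.rpow_natCast, ← ENNReal.rpow_mul, one_div,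
          mul_inv_cancel₀ (by exact_mod_cast h3.ne'), ENNReal.rpow_one]

/-- Outside a disc of radius `s`, vectors with `‖Sⁿ y‖ ≤ C sⁿ` have a local resolvent. -/
theorem aux_resolvent {E : Type*} [NormedAddCommGroup E] [NormedSpace ℂ E] [CompleteSpace E]
    (T : E →L[ℂ] E) (y : E) (s : ℝ) (hs : 0 < s) (C : ℝ) (hC0 : 0 ≤ C)
    (hC : ∀ n, ‖(T ^ n) y‖ ≤ C * s ^ n)
    (l : ℂ) (hl : s < ‖l‖) : l ∈ localResolventSet T y := by
  obtain ⟨q, hq1, hq2⟩ := exists_between hl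
  have hq0 : 0 < q := hs.trans hq1
  have hU : IsOpen {m : ℂ | q < ‖m‖} := isOpen_lt continuous_const continuous_norm
  have hsum : Summable (fun n : ℕ => C / q * (s / q) ^ n) :=
    (summable_geometric_of_lt_one (by positivity) ((div_lt_one hq0).2 hq1)).mul_left _
  have hb : ∀ (n : ℕ) (m : ℂ), m ∈ {m : ℂ | q < ‖m‖} →
      ‖-((m⁻¹) ^ (n + 1)) • (T ^ n) y‖ ≤ C / q * (s / q) ^ n := by
    intro n m hm
    have hm' : q < ‖m‖ := hm
    rw [norm_smul, norm_neg, norm_pow, norm_inv]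
    calc ‖m‖⁻¹ ^ (n + 1) * ‖(T ^ n) y‖ ≤ q⁻¹ ^ (n + 1) * (C * s ^ n) := by
          gcongr
          exact hC n
      _ = C / q * (s / q) ^ n := by
          rw [div_pow, inv_pow, pow_succ]; field_simp
  refine ⟨{m : ℂ | q < ‖m‖}, hU, hq2, fun m => ∑' n : ℕ, -((m⁻¹) ^ (n + 1)) • (T ^ n) y, ?_, ?_⟩
  · apply DifferentiableOn.analyticOnNhd _ hU
    refine Complex.differentiableOn_tsum_of_summable_norm hsum (fun n => ?_) hU hb
    intro m hm
    have hm0 : m ≠ 0 := by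
      rintro rfl
      have : q < ‖(0 : ℂ)‖ := hm
      rw [norm_zero] at this
      linarith
    apply DifferentiableAt.differentiableWithinAt
    exact (((differentiableAt_inv hm0).pow (n + 1)).neg).smul_const _
  · intro m hm
    have hm0 : m ≠ 0 := by
      rintro rfl
      have : q < ‖(0 : ℂ)‖ := hm
      rw [norm_zero] at this
      linarith
    have hsm : Summable (fun n : ℕ => -((m⁻¹) ^ (n + 1)) • (T ^ n) y) :=
      Summable.of_norm_bounded hsum (fun n => hb n m hm)
    show T (∑' n : ℕ, -((m⁻¹) ^ (n + 1)) • (T ^ n) y) -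
      m • (∑' n : ℕ, -((m⁻¹) ^ (n + 1)) • (T ^ n) y) = y
    set g : ℕ → E := fun n => ((m⁻¹) ^ n) • (T ^ n) y with hg
    have hTg : ∀ n, T (-((m⁻¹) ^ (n + 1)) • (T ^ n) y) = - g (n + 1) := by
      intro n
      simp only [hg, map_neg, map_smul, neg_smul, pow_succ' T, mul_apply_eq_comp]
    have hmg : ∀ n, m • (-((m⁻¹) ^ (n + 1)) • (T ^ n) y) = - g n := by
      intro n
      simp only [hg, neg_smul, smul_neg, smul_smul]
      congr 2
      rw [pow_succ']
      field_simp
    have hgs : Summable g := by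
      have := hsm.const_smul m
      simp only [hmg] at this
      exact summable_neg_iff.1 this
    rw [ContinuousLinearMap.map_tsum _ hsm, ← hsm.tsum_const_smul m]
    simp only [hTg, hmg, tsum_neg]
    rw [hgs.tsum_eq_zero_add]
    simp [hg]

/-- A convergent nonzero power series is nonzero somewhere in each open subset of its disc. -/
theorem aux_series (a : ℕ → ℂ) (t : NNReal) (ht : 0 < t) (D : ℝ)
    (ha : ∀ n, ‖a n‖ * (t : ℝ) ^ n ≤ D) (V : Set ℂ) (hV : IsOpen V) (hVne : V.Nonempty)
    (hVt : ∀ m ∈ V, ‖m‖ < t) (hne : ∃ n, a n ≠ 0) :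
    ∃ m ∈ V, ∃ F : ℂ, F ≠ 0 ∧
      Tendsto (fun n => ∑ k ∈ Finset.range (n + 1), a k * m ^ k) atTop (𝓝 F) := by
  set p := FormalMultilinearSeries.ofScalars ℂ a with hp
  have hrad : (t : ℝ≥0∞) ≤ p.radius := by
    refine p.le_radius_of_bound D fun n => ?_
    rw [hp, FormalMultilinearSeries.ofScalars_norm]
    exact ha n
  have hpos : 0 < p.radius := lt_of_lt_of_le (by exact_mod_cast ht) hrad
  have hF := p.hasFPowerSeriesOnBall hpos
  have hin : ∀ m ∈ V, m ∈ Metric.eball (0 : ℂ) p.radius := by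
    intro m hm
    rw [Metric.mem_eball, edist_zero_right]
    refine lt_of_lt_of_le ?_ hrad
    have := hVt m hm
    have h2 : ‖m‖₊ < t := by exact_mod_cast this
    rw [enorm_eq_nnnorm]
    exact_mod_cast h2
  have hex : ∃ m ∈ V, p.sum m ≠ 0 := by
    by_contra! hcon
    obtain ⟨m, hm⟩ := hVne
    have hpre : IsPreconnected (Metric.eball (0 : ℂ) p.radius) := by
      exact (convex_eball 0 p.radius).isPreconnected
    have hz := hF.analyticOnNhd.eqOn_zero_of_preconnected_of_eventuallyEq_zero hpre (hin m hm)
      (by filter_upwards [hV.mem_nhds hm] with w hw using hcon w hw)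
    have h0 : p = 0 := by
      refine hF.hasFPowerSeriesAt.eq_zero_of_eventually ?_
      filter_upwards [Metric.eball_mem_nhds (0 : ℂ) hpos] with w hw using hz hw
    rw [hp, FormalMultilinearSeries.ofScalars_series_eq_zero] at h0
    obtain ⟨n, hn⟩ := hne
    exact hn (by rw [h0]; rfl)
  obtain ⟨m, hm, hm0⟩ := hex
  refine ⟨m, hm, p.sum m, hm0, ?_⟩
  have hs := hF.hasSum (hin m hm)
  simp only [hp, FormalMultilinearSeries.ofScalars_apply_eq, zero_add, smul_eq_mul] at hs
  exact (hs.tendsto_sum_nat).comp (tendsto_add_atTop_nat 1)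

section Main

variable {H : Type*} [NormedAddCommGroup H] [InnerProductSpace ℂ H] [CompleteSpace H]

theorem wB_succ_apply (A : ℕ → (H →L[ℂ] H)ˣ) (n : ℕ) (x : H) :
    (wB A (n + 1) : H →L[ℂ] H) x = (A n : H →L[ℂ] H) ((wB A n : H →L[ℂ] H) x) := rfl

theorem wBi_wB (A : ℕ → (H →L[ℂ] H)ˣ) (n : ℕ) (x : H) :
    wBi A n ((wB A n : H →L[ℂ] H) x) = x := by
  have : wBi A n * (wB A n : H →L[ℂ] H) = 1 := by simp [wBi]
  exact congrArg (fun T : H →L[ℂ] H => T x) this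

theorem shift_single (A : ℕ → (H →L[ℂ] H)ˣ)
    (S : lp (fun _ : ℕ => H) 2 →L[ℂ] lp (fun _ : ℕ => H) 2)
    (hS0 : ∀ x : lp (fun _ : ℕ => H) 2, S x 0 = 0)
    (hS : ∀ (x : lp (fun _ : ℕ => H) 2) (n : ℕ), S x (n + 1) = (A n : H →L[ℂ] H) (x n))
    (n : ℕ) (x : H) :
    S (lp.single 2 n x) = lp.single 2 (n + 1) ((A n : H →L[ℂ] H) x) := by
  ext k
  cases k with
  | zero => rw [hS0, lp.single_apply_ne _ _ _ (by omega)]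
  | succ k =>
    rw [hS]
    by_cases h : k = n
    · subst h
      rw [lp.single_apply_self, lp.single_apply_self]
    · rw [lp.single_apply_ne _ _ _ h, lp.single_apply_ne _ _ _ (by omega), map_zero]

theorem shift_pow (A : ℕ → (H →L[ℂ] H)ˣ)
    (S : lp (fun _ : ℕ => H) 2 →L[ℂ] lp (fun _ : ℕ => H) 2)
    (hS0 : ∀ x : lp (fun _ : ℕ => H) 2, S x 0 = 0)
    (hS : ∀ (x : lp (fun _ : ℕ => H) 2) (n : ℕ), S x (n + 1) = (A n : H →L[ℂ] H) (x n))
    (n : ℕ) (x : H) :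
    (S ^ n) (lp.single 2 0 x) = lp.single 2 n ((wB A n : H →L[ℂ] H) x) := by
  induction n with
  | zero => rfl
  | succ n ih =>
    rw [pow_succ', mul_apply_eq_comp, ih, shift_single A S hS0 hS, wB_succ_apply]

theorem coord_span (A : ℕ → (H →L[ℂ] H)ˣ) (x : H) (y : lp (fun _ : ℕ => H) 2)
    (hy : y ∈ (Submodule.span ℂ
      (Set.range fun n : ℕ => lp.single 2 n ((wB A n : H →L[ℂ] H) x))).topologicalClosure)
    (n : ℕ) : ∃ c : ℂ, c • (wB A n : H →L[ℂ] H) x = y n := by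
  let K : Submodule ℂ H := Submodule.span ℂ {(wB A n : H →L[ℂ] H) x}
  let e : lp (fun _ : ℕ => H) 2 →L[ℂ] H := lp.evalCLM ℂ (fun _ : ℕ => H) 2 n
  have hcl : IsClosed ((K.comap (e : lp (fun _ : ℕ => H) 2 →ₗ[ℂ] H) :
      Submodule ℂ (lp (fun _ : ℕ => H) 2)) : Set (lp (fun _ : ℕ => H) 2)) :=
    (Submodule.closed_of_finiteDimensional K).preimage e.continuous
  have hle := Submodule.topologicalClosure_minimal (Submodule.span ℂ
      (Set.range fun n : ℕ => lp.single (E := fun _ : ℕ => H) 2 n ((wB A n : H →L[ℂ] H) x)))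
      (t := K.comap (e : lp (fun _ : ℕ => H) 2 →ₗ[ℂ] H)) (by
        rw [Submodule.span_le]
        rintro _ ⟨k, rfl⟩
        show (lp.single (E := fun _ : ℕ => H) 2 k ((wB A k : H →L[ℂ] H) x)) n ∈ K
        by_cases h : n = k
        · subst h
          rw [lp.single_apply_self]
          exact Submodule.mem_span_singleton_self _
        · rw [lp.single_apply_ne _ _ _ h]
          exact K.zero_mem) hcl
  exact Submodule.mem_span_singleton.1 (hle hy)

end Main

theorem stmt16 {H : Type*} [NormedAddCommGroup H] [InnerProductSpace ℂ H] [CompleteSpace H]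
    (A : ℕ → (H →L[ℂ] H)ˣ)
    (hbdd : ∃ C : ℝ, ∀ n, ‖(A n : H →L[ℂ] H)‖ ≤ C)
    (S : lp (fun _ : ℕ => H) 2 →L[ℂ] lp (fun _ : ℕ => H) 2)
    (hS0 : ∀ x : lp (fun _ : ℕ => H) 2, S x 0 = 0)
    (hS : ∀ (x : lp (fun _ : ℕ => H) 2) (n : ℕ), S x (n + 1) = (A n : H →L[ℂ] H) (x n))
    (x : H) (hx : x ≠ 0) (y : lp (fun _ : ℕ => H) 2) (hy0 : y ≠ 0)
    (hy : y ∈ (Submodule.span ℂ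
      (Set.range fun n : ℕ => lp.single 2 n ((wB A n : H →L[ℂ] H) x))).topologicalClosure)
    (hR : localSpecRad S (lp.single 2 0 x) < RA A y) :
    localSpectrum S y = {l : ℂ | (‖l‖₊ : ℝ≥0∞) ≤ localSpecRad S (lp.single 2 0 x)} := by
  classical
  clear hbdd
  choose a ha using coord_span A x y hy
  set v : ℕ → H := fun n => (wB A n : H →L[ℂ] H) x with hv
  have hvs : ∀ n, v (n + 1) = (A n : H →L[ℂ] H) (v n) := fun n => wB_succ_apply A n x
  have hya : ∀ n, y n = a n • v n := fun n => (ha n).symm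
  have hv0 : ∀ n, v n ≠ 0 := by
    intro n h
    apply hx
    rw [← wBi_wB A n x]
    show wBi A n (v n) = 0
    rw [h, map_zero]
  set x0 : lp (fun _ : ℕ => H) 2 := lp.single 2 0 x with hx0
  have hSn : ∀ n, (S ^ n) x0 = lp.single 2 n (v n) := fun n => shift_pow A S hS0 hS n x
  have hane : ∃ n, a n ≠ 0 := by
    by_contra! hcon
    apply hy0
    ext n
    rw [hya, hcon, zero_smul]
    rfl
  have hwy : ∀ n, wBi A n (y n) = a n • x := by
    intro n
    rw [hya, map_smul]
    congr 1
    exact wBi_wB A n x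
  have hxpos : 0 < ‖x‖ := norm_pos_iff.2 hx
  -- coefficient bound
  have hcoef : ∀ t : NNReal, 0 < t → (t : ℝ≥0∞) < RA A y →
      ∃ D : ℝ, 0 ≤ D ∧ ∀ n, ‖a n‖ ≤ D * ((t : ℝ)⁻¹) ^ n := by
    intro t ht htR
    rw [RA, ENNReal.lt_inv_iff_lt_inv, ← ENNReal.coe_inv ht.ne'] at htR
    obtain ⟨C, hC0, hC⟩ := aux_bound (fun n => wBi A n (y n)) t⁻¹ (by positivity) htR
    refine ⟨C / ‖x‖, by positivity, fun n => ?_⟩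
    have h1 := hC n
    simp only [hwy, norm_smul, NNReal.coe_inv] at h1
    rw [div_mul_eq_mul_div, le_div_iff₀ hxpos]
    exact h1
  have hyS : HasSum (fun k => a k • (S ^ k) x0) y := by
    have h1 := lp.hasSum_single (E := fun _ : ℕ => H) (p := 2) (by norm_num) y
    have h2 : (fun k => a k • (S ^ k) x0) =
        fun k => lp.single (E := fun _ : ℕ => H) 2 k (y k) := by
      funext k
      rw [hSn, hya, lp.single_smul]
    rw [h2]
    exact h1
  ext l
  simp only [localSpectrum, Set.mem_compl_iff, Set.mem_setOf_eq]
  constructor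
  · intro hl
    by_contra! hlt
    apply hl
    obtain ⟨s, hs1, hs2⟩ := ENNReal.lt_iff_exists_nnreal_btwn.1 (lt_min hlt hR)
    have hs0 : 0 < s := by
      have := lt_of_le_of_lt zero_le hs1
      exact_mod_cast this
    obtain ⟨t, ht1, ht2⟩ := ENNReal.lt_iff_exists_nnreal_btwn.1 (hs2.trans_le (min_le_right _ _))
    have hst : (s : ℝ) < t := by exact_mod_cast ht1
    have hs0' : (0 : ℝ) < s := by exact_mod_cast hs0
    have ht0' : (0 : ℝ) < t := hs0'.trans hst
    obtain ⟨D, hD0, hD⟩ := hcoef t (by exact_mod_cast ht0') ht2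
    obtain ⟨C, hC0, hC⟩ := aux_bound (fun n => (S ^ n) x0) s hs0 hs1
    have hsl : (s : ℝ) < ‖l‖ := by
      have := hs2.trans_le (min_le_left _ _)
      have h2 : s < ‖l‖₊ := by exact_mod_cast this
      exact_mod_cast h2
    have hq1 : (s : ℝ) / t < 1 := (div_lt_one ht0').2 hst
    refine aux_resolvent S y s hs0' (D * C * (1 - (s : ℝ) / t)⁻¹) ?_ ?_ l hsl
    · have : 0 < 1 - (s : ℝ) / t := by linarith
      positivity
    · intro n
      have h1 : HasSum (fun k => (S ^ n) (a k • (S ^ k) x0)) ((S ^ n) y) := (S ^ n).hasSum hyS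
      have h2 : HasSum (fun k : ℕ => D * C * (s : ℝ) ^ n * ((s : ℝ) / t) ^ k)
          (D * C * (s : ℝ) ^ n * (1 - (s : ℝ) / t)⁻¹) :=
        (hasSum_geometric_of_lt_one (by positivity) hq1).mul_left _
      rw [← h1.tsum_eq]
      refine (tsum_of_norm_bounded h2 fun k => ?_).trans (le_of_eq (by ring))
      rw [map_smul, ← mul_apply_eq_comp, ← pow_add, norm_smul]
      calc ‖a k‖ * ‖(S ^ (n + k)) x0‖ ≤ (D * ((t : ℝ)⁻¹) ^ k) * (C * (s : ℝ) ^ (n + k)) := by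
            gcongr
            · exact hD k
            · exact hC (n + k)
        _ = _ := by rw [div_pow, pow_add, inv_pow]; field_simp
  · rintro hle ⟨U, hU, hlU, f, hf, hfe⟩
    have hc0 : ∀ m ∈ U, -(m • f m 0) = a 0 • v 0 := by
      intro m hm
      have h := congrArg (fun z : lp (fun _ : ℕ => H) 2 => z 0) (hfe m hm)
      simp only [lp.coeFn_sub, lp.coeFn_smul, Pi.sub_apply, Pi.smul_apply, hS0, hya,
        zero_sub] at h
      exact h
    have hc1 : ∀ m ∈ U, ∀ n, (A n : H →L[ℂ] H) (f m n) - m • f m (n + 1) =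
        a (n + 1) • v (n + 1) := by
      intro m hm n
      have h := congrArg (fun z : lp (fun _ : ℕ => H) 2 => z (n + 1)) (hfe m hm)
      simp only [lp.coeFn_sub, lp.coeFn_smul, Pi.sub_apply, Pi.smul_apply, hS, hya] at h
      exact h
    by_cases hl0 : l = 0
    · subst hl0
      have hstep : ∀ n, (∀ m ∈ U, -(m • f m n) = a n • v n) → a n = 0 ∧ ∀ m ∈ U, f m n = 0 := by
        intro n hn
        have han : a n = 0 := by
          have h := hn 0 hlU
          rw [zero_smul, neg_zero] at h
          exact (smul_eq_zero.1 h.symm).resolve_right (hv0 n)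
        have hnz : ∀ m ∈ U, m ≠ 0 → f m n = 0 := by
          intro m hm hm0
          have h := hn m hm
          rw [han, zero_smul, neg_eq_zero] at h
          exact (smul_eq_zero.1 h).resolve_left hm0
        refine ⟨han, fun m hm => ?_⟩
        by_cases hm0 : m = 0
        · subst hm0
          have hcont : ContinuousAt (fun m => f m n) 0 :=
            (lp.evalCLM ℂ (fun _ : ℕ => H) 2 n).continuous.continuousAt.comp
              (hf 0 hm).continuousAt
          have h1 : Tendsto (fun m => f m n) (𝓝[≠] 0) (𝓝 (f 0 n)) :=
            hcont.tendsto.mono_left nhdsWithin_le_nhds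
          have h2 : Tendsto (fun m => f m n) (𝓝[≠] 0) (𝓝 0) := by
            refine tendsto_const_nhds.congr' ?_
            filter_upwards [self_mem_nhdsWithin, mem_nhdsWithin_of_mem_nhds (hU.mem_nhds hm)]
              with w hw1 hw2
            exact (hnz w hw2 hw1).symm
          exact tendsto_nhds_unique h1 h2
        · exact hnz m hm hm0
      have hall : ∀ n, a n = 0 ∧ ∀ m ∈ U, f m n = 0 := by
        intro n
        induction n with
        | zero => exact hstep 0 hc0
        | succ n ih =>
          refine hstep (n + 1) fun m hm => ?_
          have h := hc1 m hm n
          rw [ih.2 m hm, map_zero, zero_sub] at h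
          exact h
      obtain ⟨n, hn⟩ := hane
      exact hn (hall n).1
    · have hrtop : localSpecRad S x0 ≠ ∞ := (lt_of_lt_of_le hR le_top).ne
      obtain ⟨r, hr⟩ : ∃ r : NNReal, (r : ℝ≥0∞) = localSpecRad S x0 :=
        ⟨_, ENNReal.coe_toNNReal hrtop⟩
      rw [← hr] at hle hR
      have hlr : ‖l‖ ≤ r := by
        have : ‖l‖₊ ≤ r := by exact_mod_cast hle
        exact_mod_cast this
      have hlpos : 0 < ‖l‖ := norm_pos_iff.2 hl0
      have hr0 : (0 : ℝ) < r := hlpos.trans_le hlr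
      obtain ⟨t, ht1, ht2⟩ := ENNReal.lt_iff_exists_nnreal_btwn.1 hR
      have hrt : (r : ℝ) < t := by exact_mod_cast ht1
      have ht0 : (0 : ℝ) < t := hr0.trans hrt
      obtain ⟨D, hD0, hD⟩ := hcoef t (by exact_mod_cast ht0) ht2
      have hVo : IsOpen (U ∩ ({0}ᶜ ∩ Metric.ball (0 : ℂ) r)) :=
        hU.inter (isOpen_compl_singleton.inter Metric.isOpen_ball)
      have hVne : (U ∩ ({0}ᶜ ∩ Metric.ball (0 : ℂ) r)).Nonempty := by
        have hcont : Tendsto (fun q : ℝ => (q : ℂ) * l) (𝓝[<] 1) (𝓝 (((1 : ℝ) : ℂ) * l)) :=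
          (Continuous.tendsto (by fun_prop) 1).mono_left nhdsWithin_le_nhds
        rw [Complex.ofReal_one, one_mul] at hcont
        have h1 := hcont.eventually (hU.mem_nhds hlU)
        have h2 : ∀ᶠ q : ℝ in 𝓝[<] 1, q ∈ Set.Ioo (0 : ℝ) 1 := Ioo_mem_nhdsLT one_pos
        obtain ⟨q, hq1, hq2⟩ := (h1.and h2).exists
        refine ⟨(q : ℂ) * l, hq1, ?_, ?_⟩
        · exact mul_ne_zero (by exact_mod_cast hq2.1.ne') hl0
        · rw [mem_ball_zero_iff, norm_mul, Complex.norm_real, Real.norm_of_nonneg hq2.1.le]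
          nlinarith [hq2.1, hq2.2]
      obtain ⟨m, ⟨hmU, hm0, hmr⟩, F, hF0, hF⟩ := aux_series a t (by exact_mod_cast ht0) D
        (fun n => by
          have h := hD n
          rwa [inv_pow, ← div_eq_mul_inv, le_div_iff₀ (by positivity)] at h) _ hVo hVne
        (fun m hm => by
          have := mem_ball_zero_iff.1 hm.2.2
          linarith) hane
      have hm0' : m ≠ 0 := hm0
      have hmr' : ‖m‖ < r := mem_ball_zero_iff.1 hmr
      have hrec : ∀ n, m ^ (n + 1) • f m n =
          -((∑ k ∈ Finset.range (n + 1), a k * m ^ k) • v n) := by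
        intro n
        induction n with
        | zero =>
          have h := hc0 m hmU
          simp only [zero_add, pow_one, Finset.range_one, Finset.sum_singleton, pow_zero, mul_one]
          rw [← h, neg_neg]
        | succ n ih =>
          have h := hc1 m hmU n
          have h' : m • f m (n + 1) = (A n : H →L[ℂ] H) (f m n) - a (n + 1) • v (n + 1) := by
            rw [← h]; abel
          rw [pow_succ, mul_smul, h', smul_sub, ← map_smul, ih, map_neg, map_smul, ← hvs,
            Finset.sum_range_succ _ (n + 1), add_smul, smul_smul, mul_comm (m ^ (n + 1))]
          abel
      have hbound : ∀ᶠ n in atTop, ‖(S ^ n) x0‖ ≤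
          (‖m‖ * ‖f m‖ / (‖F‖ / 2)) * ((‖m‖₊ : NNReal) : ℝ) ^ n := by
        have hFpos : 0 < ‖F‖ := norm_pos_iff.2 hF0
        filter_upwards [hF.norm.eventually (lt_mem_nhds (half_lt_self hFpos))] with n hn
        have h1 := congrArg norm (hrec n)
        rw [norm_neg, norm_smul, norm_smul, norm_pow] at h1
        have h2 : ‖f m n‖ ≤ ‖f m‖ := lp.norm_apply_le_norm (by norm_num) (f m) n
        have h3 : ‖(S ^ n) x0‖ = ‖v n‖ := by
          rw [hSn]
          exact lp.norm_single (E := fun _ : ℕ => H) (by norm_num) n (v n)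
        rw [h3, coe_nnnorm, div_mul_eq_mul_div, le_div_iff₀ (by positivity)]
        calc ‖v n‖ * (‖F‖ / 2)
            ≤ ‖v n‖ * ‖∑ k ∈ Finset.range (n + 1), a k * m ^ k‖ := by gcongr
          _ = ‖m‖ ^ (n + 1) * ‖f m n‖ := by rw [h1, mul_comm]
          _ ≤ ‖m‖ ^ (n + 1) * ‖f m‖ := by gcongr
          _ = ‖m‖ * ‖f m‖ * ‖m‖ ^ n := by ring
      have hfin := aux_limsup (fun n => (S ^ n) x0) ‖m‖₊ _ hbound
      have hfin' : localSpecRad S x0 ≤ (‖m‖₊ : ℝ≥0∞) := hfin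
      rw [← hr] at hfin'
      have h8 : r ≤ ‖m‖₊ := by exact_mod_cast hfin'
      have h9 : (r : ℝ) ≤ ‖m‖ := by exact_mod_cast h8
      linarith
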